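/- arXiv:2405.02272 — 2 statements merged into one kernel-verified Lean document; each statement's English description precedes it below -/
import Mathlib

section
/- For every integer j ≥ 0, the strong cone Morse inequality holds: Σ_{k=0}^{j} (−1)^{j−k} b^φ_k ≤ Σ_{k=0}^{j} (−1)^{j−k} (m_k − v_{k−ℓ} + m_{k−ℓ+1} − v_{k−ℓ+1}). -/
open LinearMap Module

noncomputable section

namespace ConeMorse

variable (A : ℤ → Type) [∀ i, AddCommGroup (A i)] [∀ i, Module ℝ (A i)]

/-- Transport along an equality of indices. -/
def lcast {m k : ℤ} (h : m = k) : A m →ₗ[ℝ] A k where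
  toFun x := h ▸ x
  map_add' x y := by subst h; rfl
  map_smul' c x := by subst h; rfl

variable (d : ∀ i, A i →ₗ[ℝ] A (i + 1))

/-- Cocycles in degree `i`. -/
def cocycles (i : ℤ) : Submodule ℝ (A i) := ker (d i)

/-- Coboundaries in degree `i`: the image of `d : A^{i-1} → A^i`. -/
def cobound (i : ℤ) : Submodule ℝ (A i) :=
  range ((lcast A (show i - 1 + 1 = i by ring)).comp (d (i - 1)))

/-- Cohomology in degree `i`: cocycles modulo coboundaries. -/
abbrev Hcoh (i : ℤ) :=
  cocycles A d i ⧸ Submodule.comap (cocycles A d i).subtype (cobound A d i)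

section OneComplex

variable (ℓ : ℤ) (φ : ∀ i, A i →ₗ[ℝ] A (i + ℓ))

/-- The cone differential `∂_C (a, b) = (∂ a + φ b, (−1)^{ℓ−1} ∂ b)` on
`Cone^i(φ) = A^i ⊕ A^{i−ℓ+1}`. -/
def coneD (i : ℤ) : (A i × A (i - ℓ + 1)) →ₗ[ℝ] (A (i + 1) × A (i + 1 - ℓ + 1)) :=
  LinearMap.prod
    ((d i).comp (LinearMap.fst ℝ (A i) (A (i - ℓ + 1))) +
      (lcast A (show i - ℓ + 1 + ℓ = i + 1 by ring)).comp
        ((φ (i - ℓ + 1)).comp (LinearMap.snd ℝ (A i) (A (i - ℓ + 1)))))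
    (((-1 : ℝ) ^ (ℓ - 1)) •
      ((lcast A (show i - ℓ + 1 + 1 = i + 1 - ℓ + 1 by ring)).comp
        ((d (i - ℓ + 1)).comp (LinearMap.snd ℝ (A i) (A (i - ℓ + 1))))))

variable [∀ i, FiniteDimensional ℝ (A i)]

/-- `m_k`: the dimension of the cochain group in degree `k`. -/
def mnum (k : ℤ) : ℕ := finrank ℝ (A k)

/-- `b_k`: the dimension of the cohomology in degree `k`. -/
def bnum (k : ℤ) : ℕ := finrank ℝ (Hcoh A d k)

/-- `v_k`: the rank of `φ : A^k → A^{k+ℓ}`. -/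
def vnum (k : ℤ) : ℕ := finrank ℝ (range (φ k))

/-- `r_k`: the rank of the induced map `[φ] : H^k → H^{k+ℓ}`, computed as the dimension of
`φ(Z^k)/(φ(Z^k) ∩ B^{k+ℓ})`. -/
def rnum (k : ℤ) : ℕ :=
  finrank ℝ ((Submodule.map (φ k) (cocycles A d k)) ⧸
    Submodule.comap (Submodule.map (φ k) (cocycles A d k)).subtype (cobound A d (k + ℓ)))

/-- `b^φ_k`: the dimension of the cone cohomology in degree `k`. -/
def bphi (k : ℤ) : ℕ :=
  finrank ℝ (Hcoh (fun i => A i × A (i - ℓ + 1)) (coneD A d ℓ φ) k)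

end OneComplex

end ConeMorse

open ConeMorse

namespace ConeMorse

theorem lcast_lcast (A : ℤ → Type) [∀ i, AddCommGroup (A i)] [∀ i, Module ℝ (A i)]
    {m k p : ℤ} (h : m = k) (h' : k = p) (x : A m) :
    lcast A h' (lcast A h x) = lcast A (h.trans h') x := by
  subst h; subst h'; rfl

theorem map_lcast (A : ℤ → Type) [∀ i, AddCommGroup (A i)] [∀ i, Module ℝ (A i)] (t : ℤ)
    (f : ∀ i, A i →ₗ[ℝ] A (i + t)) {m k : ℤ} (h : m = k) (x : A m) :
    f k (lcast A h x) = lcast A (congrArg (· + t) h) (f m x) := by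
  subst h; rfl

theorem lcast_inj (A : ℤ → Type) [∀ i, AddCommGroup (A i)] [∀ i, Module ℝ (A i)]
    {m k : ℤ} (h : m = k) : Function.Injective (lcast A h) := by
  subst h; exact fun _ _ h => h

theorem finrank_coh (A : ℤ → Type) [∀ i, AddCommGroup (A i)] [∀ i, Module ℝ (A i)]
    [∀ i, FiniteDimensional ℝ (A i)] (d : ∀ i, A i →ₗ[ℝ] A (i + 1))
    (hd : ∀ i x, d (i + 1) (d i x) = 0) (i : ℤ) :
    finrank ℝ (Hcoh A d i) + finrank ℝ (range (d i)) + finrank ℝ (range (d (i - 1))) =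
      finrank ℝ (A i) := by
  have hle : cobound A d i ≤ cocycles A d i := by
    rintro _ ⟨x, rfl⟩
    change d i (lcast A _ (d (i - 1) x)) = 0
    rw [map_lcast A 1 d, hd, map_zero]
  have h1 := Submodule.finrank_quotient_add_finrank
    (Submodule.comap (cocycles A d i).subtype (cobound A d i))
  have h2 : finrank ℝ (Submodule.comap (cocycles A d i).subtype (cobound A d i)) =
      finrank ℝ (cobound A d i) :=
    (Submodule.comapSubtypeEquivOfLe hle).finrank_eq
  have h3 : finrank ℝ (cobound A d i) = finrank ℝ (range (d (i - 1))) := by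
    unfold cobound
    rw [LinearMap.range_comp]
    exact (Submodule.equivMapOfInjective _ (lcast_inj A _) _).finrank_eq.symm
  have h4 := LinearMap.finrank_range_add_finrank_ker (d i)
  have h5 : finrank ℝ (cocycles A d i) = finrank ℝ (ker (d i)) := rfl
  unfold Hcoh
  omega

theorem alt_sum (x : ℕ → ℤ) (g : ℤ → ℤ) (h0 : g (-1) = 0)
    (hx : ∀ k : ℕ, x k = g k + g ((k : ℤ) - 1)) (j : ℕ) :
    ∑ k ∈ Finset.range (j + 1), (-1 : ℤ) ^ (j - k) * x k = g j := by
  induction j with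
  | zero => simp [hx, h0]
  | succ j ih =>
    rw [Finset.sum_range_succ]
    have : ∑ k ∈ Finset.range (j + 1), (-1 : ℤ) ^ (j + 1 - k) * x k =
        - ∑ k ∈ Finset.range (j + 1), (-1 : ℤ) ^ (j - k) * x k := by
      rw [← Finset.sum_neg_distrib]
      refine Finset.sum_congr rfl fun k hk => ?_
      rw [Nat.succ_sub (by simpa [Nat.lt_succ_iff] using hk), pow_succ]
      ring
    rw [this, ih, hx]
    simp

theorem coneD_sq (ℓ : ℤ)
    (C : ℤ → Type) [∀ i, AddCommGroup (C i)] [∀ i, Module ℝ (C i)]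
    (d : ∀ i, C i →ₗ[ℝ] C (i + 1))
    (hd : ∀ i, (d (i + 1)).comp (d i) = 0)
    (φ : ∀ i, C i →ₗ[ℝ] C (i + ℓ))
    (hφ : ∀ i, (d (i + ℓ)).comp (φ i) =
      ((-1 : ℝ) ^ ℓ) • (lcast C (show i + 1 + ℓ = i + ℓ + 1 by ring)).comp
        ((φ (i + 1)).comp (d i))) (i : ℤ) (x : C i × C (i - ℓ + 1)) :
    coneD C d ℓ φ (i + 1) (coneD C d ℓ φ i x) = 0 := by
  obtain ⟨a, b⟩ := x
  have hd' : ∀ i x, d (i + 1) (d i x) = 0 := fun i x => LinearMap.congr_fun (hd i) x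
  have hφ' := LinearMap.congr_fun (hφ (i - ℓ + 1)) b
  simp only [LinearMap.comp_apply, LinearMap.smul_apply] at hφ'
  have hs : (-1 : ℝ) ^ ℓ = - (-1 : ℝ) ^ (ℓ - 1) := by
    rw [zpow_sub_one₀ (by norm_num)]; norm_num
  ext1
  · simp only [coneD, LinearMap.prod_apply, Function.prod, LinearMap.add_apply, LinearMap.comp_apply,
      LinearMap.fst_apply, LinearMap.snd_apply, LinearMap.smul_apply, map_add, map_smul, hd',
      map_lcast C 1 d, map_lcast C ℓ φ, lcast_lcast, hφ', hs, Prod.fst_zero]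
    simp
  · simp only [coneD, LinearMap.prod_apply, Function.prod, LinearMap.add_apply, LinearMap.comp_apply,
      LinearMap.fst_apply, LinearMap.snd_apply, LinearMap.smul_apply, map_add, map_smul, hd',
      map_lcast C 1 d, Prod.snd_zero, map_zero, smul_zero]

theorem vnum_le (ℓ : ℤ)
    (C : ℤ → Type) [∀ i, AddCommGroup (C i)] [∀ i, Module ℝ (C i)]
    [∀ i, FiniteDimensional ℝ (C i)]
    (d : ∀ i, C i →ₗ[ℝ] C (i + 1)) (φ : ∀ i, C i →ₗ[ℝ] C (i + ℓ)) (i : ℤ) :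
    vnum C ℓ φ (i - ℓ + 1) ≤ finrank ℝ (range (coneD C d ℓ φ i)) := by
  have h : (LinearMap.fst ℝ _ _).comp ((coneD C d ℓ φ i).comp (LinearMap.inr ℝ _ _)) =
      (lcast C (show i - ℓ + 1 + ℓ = i + 1 by ring)).comp (φ (i - ℓ + 1)) := by
    ext b
    simp [coneD]
  have h1 : finrank ℝ (range ((lcast C (show i - ℓ + 1 + ℓ = i + 1 by ring)).comp
      (φ (i - ℓ + 1)))) = vnum C ℓ φ (i - ℓ + 1) := by
    rw [LinearMap.range_comp]
    exact (Submodule.equivMapOfInjective _ (lcast_inj C _) _).finrank_eq.symm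
  rw [← h1, ← h, LinearMap.range_comp]
  exact (Submodule.finrank_map_le _ _).trans
    (Submodule.finrank_mono (LinearMap.range_comp_le_range _ _))

end ConeMorse

/-- the strong cone Morse inequalities
`Σ_{k=0}^{j} (−1)^{j−k} b^φ_k ≤ Σ_{k=0}^{j} (−1)^{j−k} (m_k − v_{k−ℓ} + m_{k−ℓ+1} − v_{k−ℓ+1})`
for every integer `j ≥ 0`. -/
theorem strong_cone_morse_inequality
    (n ℓ : ℤ) (hn : 0 ≤ n) (hℓ : 1 ≤ ℓ)
    (C : ℤ → Type) [∀ i, AddCommGroup (C i)] [∀ i, Module ℝ (C i)]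
    [∀ i, FiniteDimensional ℝ (C i)]
    (hC : ∀ i, i < 0 ∨ n < i → Subsingleton (C i))
    (d : ∀ i, C i →ₗ[ℝ] C (i + 1))
    (hd : ∀ i, (d (i + 1)).comp (d i) = 0)
    (φ : ∀ i, C i →ₗ[ℝ] C (i + ℓ))
    (hφ : ∀ i, (d (i + ℓ)).comp (φ i) =
      ((-1 : ℝ) ^ ℓ) • (lcast C (show i + 1 + ℓ = i + ℓ + 1 by ring)).comp
        ((φ (i + 1)).comp (d i))) :
    ∀ j : ℕ,
      ∑ k ∈ Finset.range (j + 1), (-1 : ℤ) ^ (j - k) * (bphi C d ℓ φ (k : ℤ) : ℤ) ≤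
        ∑ k ∈ Finset.range (j + 1), (-1 : ℤ) ^ (j - k) *
          ((mnum C (k : ℤ) : ℤ) - vnum C ℓ φ ((k : ℤ) - ℓ) +
            mnum C ((k : ℤ) - ℓ + 1) - vnum C ℓ φ ((k : ℤ) - ℓ + 1)) := by
  intro j
  have hv0 : vnum C ℓ φ (-1 - ℓ + 1) = 0 := by
    have := hC (-1 - ℓ + 1) (Or.inl (by omega))
    have := LinearMap.finrank_range_le (φ (-1 - ℓ + 1))
    rw [finrank_zero_of_subsingleton (M := C (-1 - ℓ + 1))] at this
    unfold vnum
    omega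
  have hR0 : finrank ℝ (range (coneD C d ℓ φ (-1))) = 0 := by
    have := hC (-1 - ℓ + 1) (Or.inl (by omega))
    have := hC (-1) (Or.inl (by omega))
    have := LinearMap.finrank_range_le (coneD C d ℓ φ (-1))
    rw [finrank_zero_of_subsingleton (M := C (-1) × C (-1 - ℓ + 1))] at this
    omega
  have key := alt_sum
    (fun k : ℕ => ((mnum C (k : ℤ) : ℤ) - vnum C ℓ φ ((k : ℤ) - ℓ) +
            mnum C ((k : ℤ) - ℓ + 1) - vnum C ℓ φ ((k : ℤ) - ℓ + 1)) - bphi C d ℓ φ (k : ℤ))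
    (fun i => (finrank ℝ (range (coneD C d ℓ φ i)) : ℤ) - vnum C ℓ φ (i - ℓ + 1))
    (by simp only [hv0, hR0]; simp)
    (by
      intro k
      have h := finrank_coh (fun i => C i × C (i - ℓ + 1)) (coneD C d ℓ φ)
        (coneD_sq ℓ C d hd φ hφ) (k : ℤ)
      rw [Module.finrank_prod] at h
      have e : (k : ℤ) - 1 - ℓ + 1 = k - ℓ := by ring
      simp only [e]
      unfold mnum bphi
      omega) j
  simp only [mul_sub (_ : ℤ) (_ - _ : ℤ) (bphi _ _ _ _ _ : ℤ), Finset.sum_sub_distrib] at key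
  have := vnum_le ℓ C d φ j
  linarith [(Nat.cast_le (α := ℤ)).2 this]
end
end

section
/- Suppose m_k = b_k for every k (the algebraic model of a perfect Morse function). Then the strong cone Morse inequalities become equalities: for every integer j ≥ 0, Σ_{k=0}^{j} (−1)^{j−k} b^φ_k = Σ_{k=0}^{j} (−1)^{j−k} (m_k − v_{k−ℓ} + m_{k−ℓ+1} − v_{k−ℓ+1}). -/
open LinearMap Module

noncomputable section

open ConeMorse

theorem lcast_inj {A : ℤ → Type} [∀ i, AddCommGroup (A i)] [∀ i, Module ℝ (A i)]
    {m k : ℤ} (h : m = k) : Function.Injective (lcast A h) := by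
  subst h
  intro x y hxy
  exact hxy

theorem finrank_range_inj_comp {U V W : Type} [AddCommGroup U] [Module ℝ U]
    [AddCommGroup V] [Module ℝ V] [AddCommGroup W] [Module ℝ W]
    (g : V →ₗ[ℝ] W) (f : U →ₗ[ℝ] V) (hg : Function.Injective g) :
    finrank ℝ (range (g.comp f)) = finrank ℝ (range f) := by
  rw [LinearMap.range_comp]
  exact (LinearEquiv.finrank_eq (Submodule.equivMapOfInjective g hg (range f))).symm

theorem finrank_Hcoh {A : ℤ → Type} [∀ i, AddCommGroup (A i)] [∀ i, Module ℝ (A i)]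
    [∀ i, FiniteDimensional ℝ (A i)] (d : ∀ i, A i →ₗ[ℝ] A (i + 1)) (i : ℤ)
    (h : cobound A d i ≤ cocycles A d i) :
    finrank ℝ (Hcoh A d i) + finrank ℝ (range (d (i - 1))) + finrank ℝ (range (d i))
      = finrank ℝ (A i) := by
  have h1 := Submodule.finrank_quotient_add_finrank
    (Submodule.comap (cocycles A d i).subtype (cobound A d i))
  have h2 : finrank ℝ (Submodule.comap (cocycles A d i).subtype (cobound A d i))
      = finrank ℝ (cobound A d i) :=
    LinearEquiv.finrank_eq (Submodule.comapSubtypeEquivOfLe h)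
  have h3 : finrank ℝ (cobound A d i) = finrank ℝ (range (d (i - 1))) :=
    finrank_range_inj_comp _ _ (lcast_inj _)
  have h4 := LinearMap.finrank_range_add_finrank_ker (d i)
  change finrank ℝ (Hcoh A d i) + _ = finrank ℝ (ker (d i)) at h1
  omega

theorem d_zero_of_perf {A : ℤ → Type} [∀ i, AddCommGroup (A i)] [∀ i, Module ℝ (A i)]
    [∀ i, FiniteDimensional ℝ (A i)] (d : ∀ i, A i →ₗ[ℝ] A (i + 1)) (k : ℤ)
    (h : mnum A k = bnum A d k) : d k = 0 := by
  rw [← LinearMap.ker_eq_top]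
  apply Submodule.eq_top_of_finrank_eq
  apply le_antisymm (Submodule.finrank_le _)
  have h1 := Submodule.finrank_quotient_le
    (Submodule.comap (cocycles A d k).subtype (cobound A d k))
  unfold mnum bnum at h
  rw [h]
  exact h1

theorem coneD_eq {A : ℤ → Type} [∀ i, AddCommGroup (A i)] [∀ i, Module ℝ (A i)]
    (d : ∀ i, A i →ₗ[ℝ] A (i + 1)) (hd : ∀ i, d i = 0) (ℓ : ℤ)
    (φ : ∀ i, A i →ₗ[ℝ] A (i + ℓ)) (i : ℤ) :
    coneD A d ℓ φ i = ((LinearMap.inl ℝ (A (i + 1)) (A (i + 1 - ℓ + 1))).comp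
      (lcast A (show i - ℓ + 1 + ℓ = i + 1 by ring))).comp
        ((φ (i - ℓ + 1)).comp (LinearMap.snd ℝ (A i) (A (i - ℓ + 1)))) := by
  ext x <;> simp [coneD, hd]

theorem finrank_coneD {A : ℤ → Type} [∀ i, AddCommGroup (A i)] [∀ i, Module ℝ (A i)]
    [∀ i, FiniteDimensional ℝ (A i)]
    (d : ∀ i, A i →ₗ[ℝ] A (i + 1)) (hd : ∀ i, d i = 0) (ℓ : ℤ)
    (φ : ∀ i, A i →ₗ[ℝ] A (i + ℓ)) (i : ℤ) :
    finrank ℝ (range (coneD A d ℓ φ i)) = vnum A ℓ φ (i - ℓ + 1) := by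
  rw [coneD_eq d hd, finrank_range_inj_comp, LinearMap.range_comp_of_range_eq_top]
  · rfl
  · exact LinearMap.range_eq_top.2 LinearMap.snd_surjective
  · exact LinearMap.inl_injective.comp (lcast_inj _)

theorem cast_snd {A : ℤ → Type} [∀ i, AddCommGroup (A i)] [∀ i, Module ℝ (A i)] (ℓ : ℤ)
    {m k : ℤ} (h : m = k) (x : A m × A (m - ℓ + 1)) (hx : x.2 = 0) :
    (lcast (fun i => A i × A (i - ℓ + 1)) h x).2 = 0 := by
  subst h
  exact hx

theorem bphi_eq {A : ℤ → Type} [∀ i, AddCommGroup (A i)] [∀ i, Module ℝ (A i)]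
    [∀ i, FiniteDimensional ℝ (A i)]
    (d : ∀ i, A i →ₗ[ℝ] A (i + 1)) (hd : ∀ i, d i = 0) (ℓ : ℤ)
    (φ : ∀ i, A i →ₗ[ℝ] A (i + ℓ)) (k : ℤ) :
    bphi A d ℓ φ k + vnum A ℓ φ (k - ℓ) + vnum A ℓ φ (k - ℓ + 1)
      = mnum A k + mnum A (k - ℓ + 1) := by
  have h := finrank_Hcoh (A := fun i => A i × A (i - ℓ + 1)) (coneD A d ℓ φ) k (by
    rintro _ ⟨x, rfl⟩
    have h0 := cast_snd (A := A) ℓ (show k - 1 + 1 = k by ring) (coneD A d ℓ φ (k - 1) x)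
      (by simp [coneD_eq d hd])
    change coneD A d ℓ φ k _ = 0
    rw [coneD_eq d hd]
    simp only [LinearMap.comp_apply, LinearMap.snd_apply]
    erw [h0]
    simp)
  have e1 := finrank_coneD d hd ℓ φ (k - 1)
  have e2 := finrank_coneD d hd ℓ φ k
  have e0 : vnum A ℓ φ (k - 1 - ℓ + 1) = vnum A ℓ φ (k - ℓ) :=
    congrArg (vnum A ℓ φ) (by ring)
  have e3 : finrank ℝ (A k × A (k - ℓ + 1)) = mnum A k + mnum A (k - ℓ + 1) :=
    Module.finrank_prod
  change bphi A d ℓ φ k + finrank ℝ (range (coneD A d ℓ φ (k - 1)))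
    + finrank ℝ (range (coneD A d ℓ φ k)) = finrank ℝ (A k × A (k - ℓ + 1)) at h
  omega

/-- STATEMENT 12: if `m_k = b_k` for every `k` (a perfect Morse function), then the strong
cone Morse inequalities become equalities: for every integer `j ≥ 0`,
`Σ_{k=0}^{j} (−1)^{j−k} b^φ_k = Σ_{k=0}^{j} (−1)^{j−k} (m_k − v_{k−ℓ} + m_{k−ℓ+1} − v_{k−ℓ+1})`. -/
theorem perfect_morse_strong_equality
    (n ℓ : ℤ) (hn : 0 ≤ n) (hℓ : 1 ≤ ℓ)
    (C : ℤ → Type) [∀ i, AddCommGroup (C i)] [∀ i, Module ℝ (C i)]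
    [∀ i, FiniteDimensional ℝ (C i)]
    (hC : ∀ i, i < 0 ∨ n < i → Subsingleton (C i))
    (d : ∀ i, C i →ₗ[ℝ] C (i + 1))
    (hd : ∀ i, (d (i + 1)).comp (d i) = 0)
    (φ : ∀ i, C i →ₗ[ℝ] C (i + ℓ))
    (hφ : ∀ i, (d (i + ℓ)).comp (φ i) =
      ((-1 : ℝ) ^ ℓ) • (lcast C (show i + 1 + ℓ = i + ℓ + 1 by ring)).comp
        ((φ (i + 1)).comp (d i)))
    (hperf : ∀ k : ℤ, mnum C k = bnum C d k) :
    ∀ j : ℕ,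
      ∑ k ∈ Finset.range (j + 1), (-1 : ℤ) ^ (j - k) * (bphi C d ℓ φ (k : ℤ) : ℤ) =
        ∑ k ∈ Finset.range (j + 1), (-1 : ℤ) ^ (j - k) *
          ((mnum C (k : ℤ) : ℤ) - vnum C ℓ φ ((k : ℤ) - ℓ) +
            mnum C ((k : ℤ) - ℓ + 1) - vnum C ℓ φ ((k : ℤ) - ℓ + 1)) := by
  intro j
  refine Finset.sum_congr rfl fun k _ => ?_
  have h := bphi_eq d (fun i => d_zero_of_perf d i (hperf i)) ℓ φ (k : ℤ)
  congr 1
  omega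
end
end
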